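/- Let k ≥ 1 be an integer and let G' be a graph of genus C(k,2) with a vertex v such that: for every integer 1 ≤ l ≤ k-2, gon_{l(l+1)/2}(G') ≥ lk, and for every integer r ≥ 1 the divisor gon_r(G')·v realises the r-th gonality of G'. Let n ≥ 1 and let G be the graph obtained from G' by attaching a complete graph K_n: add n new vertices pairwise joined by exactly one edge, and join v to each of the n new vertices by exactly k+1 edges. Then for every integer 1 ≤ l ≤ k+n-2, gon_{l(l+1)/2}(G) ≥ l(k+n). -/

import Mathlib

open Finset

variable {V : Type*} [Fintype V] [DecidableEq V]

/-- A finite loopless multigraph on vertex type `V`, given by symmetric edge multiplicities. -/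
structure Multigraph (V : Type*) [Fintype V] [DecidableEq V] where
  mult : V → V → ℕ
  symm : ∀ u v, mult u v = mult v u
  loopless : ∀ v, mult v v = 0

namespace Multigraph

def Adj (G : Multigraph V) (u v : V) : Prop := 0 < G.mult u v

/-- A graph is connected. -/
def Connected (G : Multigraph V) : Prop :=
  Nonempty V ∧ ∀ u v : V, Relation.ReflTransGen G.Adj u v

/-- Valence of a vertex. -/
def valence (G : Multigraph V) (v : V) : ℕ := ∑ u, G.mult v u

/-- The Laplacian applied to an integer-valued function on the vertices. -/
def laplacian (G : Multigraph V) (f : V → ℤ) : V → ℤ :=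
  fun w => ∑ u, (G.mult w u : ℤ) * (f w - f u)

/-- Degree of a divisor. -/
def degree (D : V → ℤ) : ℤ := ∑ v, D v

/-- A divisor is effective if all coefficients are nonnegative. -/
def Effective (D : V → ℤ) : Prop := ∀ v, 0 ≤ D v

/-- Linear equivalence of divisors: they differ by a sequence of chip-firing moves,
equivalently by a Laplacian of an integer function. -/
def LinEquiv (G : Multigraph V) (D D' : V → ℤ) : Prop :=
  ∃ f : V → ℤ, D' = D - G.laplacian f

/-- A divisor is winnable if it is linearly equivalent to an effective divisor. -/
def Winnable (G : Multigraph V) (D : V → ℤ) : Prop :=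
  ∃ E : V → ℤ, Effective E ∧ G.LinEquiv D E

/-- The Baker–Norine rank of a divisor: the largest `r` such that `D - E` is winnable for
every effective divisor `E` of degree `r` (the defining set contains all negative integers,
and its supremum is `-1` precisely when `D` itself is not winnable). -/
noncomputable def rank (G : Multigraph V) (D : V → ℤ) : ℤ :=
  sSup {r : ℤ | ∀ E : V → ℤ, Effective E → degree E = r → G.Winnable (fun w => D w - E w)}

/-- The `k`-th gonality of a graph: the smallest degree of a divisor of rank `k`. -/
noncomputable def gonality (G : Multigraph V) (k : ℤ) : ℤ :=
  sInf {d : ℤ | ∃ D : V → ℤ, G.rank D = k ∧ degree D = d}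

/-- A graph is gonality-tight if its second gonality exceeds its first by exactly 1. -/
def GonalityTight (G : Multigraph V) : Prop :=
  G.gonality 2 = G.gonality 1 + 1

/-- A divisor realises the `k`-th gonality if it has rank `k` and degree `gon_k(G)`. -/
def Realises (G : Multigraph V) (k : ℤ) (D : V → ℤ) : Prop :=
  G.rank D = k ∧ degree D = G.gonality k

/-- A divisor is `v`-reduced: nonnegative away from `v`, and set-firing any nonempty set of
vertices not containing `v` creates a negative coefficient inside the set. -/
def Reduced (G : Multigraph V) (v : V) (D : V → ℤ) : Prop :=
  (∀ w, w ≠ v → 0 ≤ D w) ∧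
    ∀ U : Finset V, U.Nonempty → v ∉ U →
      ∃ w ∈ U, D w - ∑ u ∈ Uᶜ, (G.mult w u : ℤ) < 0

/-- The genus (first Betti number) of a graph: `|E| - |V| + 1`. -/
def genus (G : Multigraph V) : ℤ :=
  ((∑ u, ∑ v, G.mult u v : ℕ) : ℤ) / 2 - Fintype.card V + 1

/-- The canonical divisor of a graph. -/
def canonical (G : Multigraph V) : V → ℤ :=
  fun w => (G.valence w : ℤ) - 2

/-- The subgraph induced on a set `S` of vertices (with all edges among `S`). -/
def induce (G : Multigraph V) (S : Finset V) : Multigraph {x // x ∈ S} where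
  mult a b := G.mult a b
  symm a b := G.symm a b
  loopless a := G.loopless a

/-- `G.SeparatedBy u w v` means every path from `w` to `v` passes through `u`. -/
def SeparatedBy (G : Multigraph V) (u w v : V) : Prop :=
  ¬ Relation.ReflTransGen (fun x y => G.Adj x y ∧ x ≠ u ∧ y ≠ u) w v

end Multigraph

/-- Size of the `i`-th level of a quasi-banana graph: level `0` has a single vertex. -/
def qbSize (q : ℕ → ℕ) (i : ℕ) : ℕ := if i = 0 then 1 else q i

/-- `ℓ` is a quasi-banana labelling of `G` exhibiting `G ≅ QB_m(q_1, …, q_m)`: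
`ℓ` is a bijection onto the pairs `(i, j)` with `i ≤ m`, `1 ≤ j ≤ qbSize q i`
(vertex `u_{i,j}` is the vertex labelled `(i,j)`), and the edge multiplicities are:
one edge between distinct vertices of the same level, `(∑_{k=1}^{i} q_k) + 2` edges
between `u_{i,1}` and each `u_{i+1,j}`, and no other edges. -/
def Multigraph.IsQBLabelling (G : Multigraph V) (m : ℕ) (q : ℕ → ℕ) (ℓ : V → ℕ × ℕ) : Prop :=
  (∀ i, 1 ≤ i → i ≤ m → 0 < q i) ∧
  Function.Injective ℓ ∧
  (∀ v : V, (ℓ v).1 ≤ m ∧ 1 ≤ (ℓ v).2 ∧ (ℓ v).2 ≤ qbSize q (ℓ v).1) ∧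
  (∀ i j : ℕ, i ≤ m → 1 ≤ j → j ≤ qbSize q i → ∃ v, ℓ v = (i, j)) ∧
  (∀ v w : V, v ≠ w → G.mult v w =
    if (ℓ v).1 = (ℓ w).1 then 1
    else if (ℓ v).1 + 1 = (ℓ w).1 ∧ (ℓ v).2 = 1 then (∑ i ∈ Finset.Icc 1 (ℓ v).1, q i) + 2
    else if (ℓ w).1 + 1 = (ℓ v).1 ∧ (ℓ w).2 = 1 then (∑ i ∈ Finset.Icc 1 (ℓ w).1, q i) + 2
    else 0)

/-- A graph is a quasi-banana graph if it is isomorphic to some `QB_m(N)`. -/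
def Multigraph.IsQuasiBanana (G : Multigraph V) : Prop :=
  ∃ (m : ℕ) (q : ℕ → ℕ) (ℓ : V → ℕ × ℕ), G.IsQBLabelling m q ℓ

/-- The graph obtained from `G'` by attaching a complete graph `K_n`: `n` new vertices
pairwise joined by exactly one edge, each joined to `v` by exactly `k+1` edges. -/
def attachComplete (G' : Multigraph V) (v : V) (k n : ℕ) : Multigraph (V ⊕ Fin n) where
  mult x y :=
    match x, y with
    | Sum.inl a, Sum.inl b => G'.mult a b
    | Sum.inl a, Sum.inr _ => if a = v then k + 1 else 0
    | Sum.inr _, Sum.inl b => if b = v then k + 1 else 0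
    | Sum.inr i, Sum.inr j => if i = j then 0 else 1
  symm := by
    rintro (a | i) (b | j)
    · exact G'.symm a b
    · rfl
    · rfl
    · by_cases h : i = j
      · simp [h]
      · simp [h, Ne.symm h]
  loopless := by
    rintro (a | i)
    · exact G'.loopless a
    · simp

/-!
Firing the new vertices of a divisor `D` on `G` brings their chip counts, in increasing order, into
any chosen window of a sequence `B`. If the `i`-th of them holds at most `k + i` chips, none of them
fires more often than `v` on the way to an effective divisor, so only the overflow above these
thresholds helps `G'`: the restriction of `D` to `G'` keeps rank at least `r` minus the overflow.

On `G'`, a divisor of rank at least `s` with `2 * s ≥ j * (j + 1)` has degree at least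
`s + j * (2 * k - j - 1) / 2`, by the gonality hypothesis when `j ≤ k - 2` and by the genus
otherwise. Taking `j = l - p`, it remains to find a window whose overflow is at most
`l + (l - 1) + ⋯ + (l - p + 1)` while enough chips lie below the thresholds. Sliding the window,
this is a discrete intermediate value argument, and its step compares two Young diagrams, the parts
of `B` below and above the level `l`, with staircases.
-/

section Counting

lemma mul_add_one_self_nonneg (a : ℤ) : 0 ≤ a * (a + 1) := by
  rcases le_or_gt 0 a with h | h
  · positivity
  · exact mul_nonneg_of_nonpos_of_nonpos h.le (Int.add_one_le_of_lt h)

lemma two_mul_sum_range_sub (l : ℤ) (p : ℕ) :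
    2 * ∑ i ∈ range p, (l - i) = l * (l + 1) - (l - p) * (l - p + 1) := by
  induction p with
  | zero => simp
  | succ p ih =>
    rw [sum_range_succ, mul_add, ih]
    push_cast
    ring

lemma two_mul_sum_card_filter_le {α : Type*} [LinearOrder α] (S : Finset α) :
    2 * ∑ i ∈ S, #{h ∈ S | h ≤ i} = #S * (#S + 1) := by
  induction S using Finset.induction_on_max with
  | empty => simp
  | insert a s ha ih =>
    have ha' : a ∉ s := fun h => lt_irrefl _ (ha a h)
    have hself : {h ∈ insert a s | h ≤ a} = insert a s :=
      filter_true_of_mem fun x hx => (mem_insert.1 hx).elim le_of_eq fun h => (ha x h).le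
    have hrest : ∀ i ∈ s, #{h ∈ insert a s | h ≤ i} = #{h ∈ s | h ≤ i} := fun i hi => by
      rw [filter_insert, if_neg (ha i hi).not_ge]
    rw [sum_insert ha', hself, sum_congr rfl hrest, mul_add, ih, card_insert_of_notMem ha']
    ring

lemma two_mul_sum_card_filter_ge {α : Type*} [LinearOrder α] (S : Finset α) :
    2 * ∑ i ∈ S, #{h ∈ S | i ≤ h} = #S * (#S + 1) := by
  rw [← two_mul_sum_card_filter_le S]
  exact congrArg (2 * ·) (sum_card_bipartiteAbove_eq_sum_card_bipartiteBelow (· ≤ ·))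

lemma exists_threshold {f : ℕ → ℤ} (hf : Monotone f) (c : ℤ) (N : ℕ) :
    ∃ p ≤ N, ∀ i < N, i < p ↔ f i ≤ c := by
  induction N with
  | zero => exact ⟨0, le_rfl, by simp⟩
  | succ N ih =>
    obtain ⟨p, hpN, hp⟩ := ih
    by_cases hN : f N ≤ c
    · exact ⟨N + 1, le_rfl, fun i hi => ⟨fun _ => (hf (by omega)).trans hN, fun _ => hi⟩⟩
    · refine ⟨p, by omega, fun i hi => ?_⟩
      rcases Nat.lt_succ_iff_lt_or_eq.1 hi with h | rfl
      · exact hp i h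
      · exact iff_of_false (by omega) hN

lemma sum_max_sub_eq_of_threshold {f : ℕ → ℤ} {c : ℤ} {p N : ℕ} (hpN : p ≤ N)
    (hp : ∀ i < N, i < p ↔ f i ≤ c) :
    ∑ i ∈ range N, max (c - f i) 0 = ∑ i ∈ range p, (c - f i) := by
  rw [← sum_range_add_sum_Ico _ hpN, sum_eq_zero (s := Ico p N), add_zero]
  · refine sum_congr rfl fun i hi => ?_
    have := mem_range.1 hi
    have := hp i
    omega
  · intro i hi
    have := mem_Ico.1 hi
    have := hp i
    omega

lemma sum_max_sub_add_one_eq_of_threshold {f : ℕ → ℤ} {c : ℤ} {p N : ℕ} (hpN : p ≤ N)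
    (hp : ∀ i < N, i < p ↔ f i ≤ c) :
    ∑ i ∈ range N, max (f i - (c + 1)) 0 = ∑ i ∈ Ico p N, (f i - (c + 1)) := by
  rw [← sum_range_add_sum_Ico _ hpN, sum_eq_zero (s := range p), zero_add]
  · refine sum_congr rfl fun i hi => ?_
    have := mem_Ico.1 hi
    have := hp i
    omega
  · intro i hi
    have := mem_range.1 hi
    have := hp i
    omega

lemma sum_range_succ_reflect (g : ℕ → ℤ) (n : ℕ) :
    ∑ i ∈ range n, g (i + 1) = ∑ i ∈ range n, g (n - i) := by
  rw [← sum_range_reflect]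
  refine sum_congr rfl fun i hi => congrArg g ?_
  have := mem_range.1 hi
  omega

end Counting

section Diagrams

/-- The first `N + 1` columns of a Young diagram of width at most `w`, given by the heights `u`
of its columns; beyond column `N` the sequence `u` need not vanish. -/
structure IsDiagram (N w : ℕ) (u : ℕ → ℤ) : Prop where
  antitone : Antitone u
  nonneg : ∀ i, 0 ≤ u i
  eq_zero : ∀ i, w ≤ i → i ≤ N → u i = 0
  le : w ≤ N + 1

/-- The number of cells of the `i`-th column of `u` outside the staircase with column heights
`L, L - 1, …, 1`. -/
def excess (L : ℤ) (u : ℕ → ℤ) (i : ℕ) : ℤ := max (u i - max (L - i) 0) 0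

/-- The number of cells of the `i`-th column of `u` inside the staircase with column heights
`L, L - 1, …, 1`. -/
def inside (L : ℤ) (u : ℕ → ℤ) (i : ℕ) : ℤ := min (u i) (max (L - i) 0)

/-- The columns of `u` other than the first that are taller than the corresponding nonempty column
of the staircase with column heights `L, L - 1, …, 1`. -/
def protruding (N : ℕ) (L : ℤ) (u : ℕ → ℤ) : Finset ℕ :=
  {i ∈ Ioc 0 N | (i : ℤ) < L ∧ L - i < u i}

variable {N w w' : ℕ} {L L' y : ℤ} {u t : ℕ → ℤ}

lemma mem_protruding {i : ℕ} :
    i ∈ protruding N L u ↔ (0 < i ∧ i ≤ N) ∧ (i : ℤ) < L ∧ L - i < u i := by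
  simp [protruding]

lemma excess_nonneg (i : ℕ) : 0 ≤ excess L u i := le_max_right _ _

lemma IsDiagram.inside_nonneg (hu : IsDiagram N w u) (i : ℕ) : 0 ≤ inside L u i :=
  le_min (hu.nonneg i) (le_max_right _ _)

lemma IsDiagram.lt_of_pos (hu : IsDiagram N w u) {i : ℕ} (hi : i ≤ N) (hpos : 0 < u i) :
    i < w := by
  by_contra h
  exact hpos.ne' (hu.eq_zero i (not_lt.1 h) hi)

-- The columns that precede a column of excess `x` protrude by at least `x - 1`, `x - 2`, ….
lemma IsDiagram.excess_le_card_add (hu : IsDiagram N w u) (hy : 0 ≤ y)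
    (h0 : u 0 ≤ max (L + y) 0) {i : ℕ} (hi : i ∈ protruding N L u) :
    excess L u i ≤ #{h ∈ protruding N L u | h ≤ i} + y := by
  rw [mem_protruding] at hi
  have hcard : #(Ioc (L - u i).toNat i) ≤ #{h ∈ protruding N L u | h ≤ i} := by
    refine card_le_card fun h hh => ?_
    rw [mem_Ioc] at hh
    have := hu.antitone hh.2
    rw [mem_filter, mem_protruding]
    omega
  have := hu.antitone (Nat.zero_le i)
  rw [Nat.card_Ioc] at hcard
  unfold excess
  omega

lemma IsDiagram.excess_le_card_add_one_add (hu : IsDiagram N w u) (hy : 0 ≤ y)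
    (h0 : u 0 ≤ max (L + y) 0) {i : ℕ} (hiN : i ≤ N) (hi : L ≤ i) :
    excess L u i ≤ #(protruding N L u) + 1 + y := by
  have hcard : #(Ioo (L - u i).toNat L.toNat) ≤ #(protruding N L u) := by
    refine card_le_card fun h hh => ?_
    rw [mem_Ioo] at hh
    have := hu.antitone (show h ≤ i by omega)
    rw [mem_protruding]
    omega
  have := hu.antitone (Nat.zero_le i)
  rw [Nat.card_Ioo] at hcard
  unfold excess
  omega

lemma IsDiagram.sum_excess_le_split (hu : IsDiagram N w u) :
    ∑ i ∈ range N, excess L u i ≤ excess L u 0 + ∑ i ∈ protruding N L u, excess L u i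
      + ∑ i ∈ Ico (max L 1).toNat w, excess L u i := by
  have hdisj : Disjoint (protruding N L u) (Ico (max L 1).toNat w) := by
    refine disjoint_left.2 fun i hi hi' => ?_
    rw [mem_protruding] at hi
    rw [mem_Ico] at hi'
    omega
  have h0 : 0 ∉ protruding N L u ∪ Ico (max L 1).toNat w := by
    rw [mem_union, mem_protruding, mem_Ico]
    omega
  rw [add_assoc, ← sum_union hdisj, ← sum_insert h0, ← sum_filter_ne_zero]
  refine sum_le_sum_of_subset_of_nonneg (fun i hi => ?_) fun i _ _ => excess_nonneg i
  rw [mem_filter, mem_range, excess] at hi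
  have := fun h => hu.lt_of_pos (i := i) hi.1.le h
  rw [mem_insert, mem_union, mem_protruding, mem_Ico]
  omega

lemma IsDiagram.two_mul_sum_excess_le (hu : IsDiagram N w u) (hy : 0 ≤ y)
    (h0 : u 0 ≤ max (L + y) 0) :
    2 * ∑ i ∈ range N, excess L u i ≤ #(protruding N L u) * (#(protruding N L u) + 1)
      + 2 * (max (w - L) 0 * (#(protruding N L u) + 1))
      + 2 * (y * (1 + #(protruding N L u) + max (w - L) 0)) := by
  set X := protruding N L u
  have hzero : excess L u 0 ≤ y := by unfold excess; omega
  have hprot : ∑ i ∈ X, excess L u i ≤ ∑ i ∈ X, (#{h ∈ X | h ≤ i} : ℤ) + #X * y :=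
    calc ∑ i ∈ X, excess L u i ≤ ∑ i ∈ X, ((#{h ∈ X | h ≤ i} : ℤ) + y) :=
          sum_le_sum fun i hi => hu.excess_le_card_add hy h0 hi
      _ = _ := by rw [sum_add_distrib, sum_const, nsmul_eq_mul]
  have hbeyond : ∑ i ∈ Ico (max L 1).toNat w, excess L u i ≤ max (w - L) 0 * (#X + 1 + y) :=
    calc ∑ i ∈ Ico (max L 1).toNat w, excess L u i
        ≤ ∑ _i ∈ Ico (max L 1).toNat w, ((#X : ℤ) + 1 + y) := sum_le_sum fun i hi => by
          have hiw := mem_Ico.1 hi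
          have := hu.le
          exact hu.excess_le_card_add_one_add hy h0 (by omega) (by omega)
      _ ≤ _ := by
          rw [sum_const, Nat.card_Ico, nsmul_eq_mul]
          gcongr
          omega
  have htri : 2 * ∑ i ∈ X, (#{h ∈ X | h ≤ i} : ℤ) = #X * (#X + 1) := by
    exact_mod_cast two_mul_sum_card_filter_le X
  linarith [hu.sum_excess_le_split (L := L)]

lemma IsDiagram.card_filter_ge_add_le (hu : IsDiagram N w u) {i : ℕ}
    (hi : i ∈ protruding N L u) :
    #{h ∈ protruding N L u | i ≤ h} + max (L - w) 0 ≤ L - i := by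
  have hcard : #{h ∈ protruding N L u | i ≤ h} ≤ #(Ico i (min L w).toNat) := by
    refine card_le_card fun h hh => ?_
    rw [mem_filter, mem_protruding] at hh
    have := hu.lt_of_pos hh.1.1.2 (by omega)
    rw [mem_Ico]
    omega
  rw [mem_protruding] at hi
  have := hu.lt_of_pos hi.1.2 (by omega)
  rw [Nat.card_Ico] at hcard
  omega

lemma IsDiagram.le_two_mul_sum_inside_protruding (hu : IsDiagram N w u) :
    #(protruding N L u) * (#(protruding N L u) + 1) + 2 * (#(protruding N L u) * max (L - w) 0)
      ≤ 2 * ∑ i ∈ protruding N L u, inside L u i := by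
  set X := protruding N L u with hX
  have htri : 2 * ∑ i ∈ X, (#{h ∈ X | i ≤ h} : ℤ) = #X * (#X + 1) := by
    exact_mod_cast two_mul_sum_card_filter_ge X
  have hcol : ∑ i ∈ X, ((#{h ∈ X | i ≤ h} : ℤ) + max (L - w) 0) ≤ ∑ i ∈ X, inside L u i :=
    sum_le_sum fun i hi => by
      refine (hu.card_filter_ge_add_le hi).trans ?_
      rw [hX, mem_protruding] at hi
      unfold inside
      omega
  rw [sum_add_distrib, sum_const, nsmul_eq_mul] at hcol
  linarith

lemma IsDiagram.sum_inside_le (hu : IsDiagram N w u) {S : Finset ℕ} (hS : S ⊆ Ioc 0 N) :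
    ∑ i ∈ S, inside L u i ≤ ∑ i ∈ range N, inside L u (i + 1) := by
  have hshift : ∑ i ∈ Ioc 0 N, inside L u i = ∑ i ∈ range N, inside L u (i + 1) := by
    rw [← sum_image (g := (· + 1)) (fun _ _ _ _ => Nat.succ_injective.eq_iff.1)]
    refine sum_congr ?_ fun _ _ => rfl
    ext i
    simp only [mem_Ioc, mem_image, mem_range]
    exact ⟨fun h => ⟨i - 1, by omega, by omega⟩, by rintro ⟨j, hj, rfl⟩; omega⟩
  exact hshift ▸ sum_le_sum_of_subset_of_nonneg hS fun i _ _ => hu.inside_nonneg i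

lemma IsDiagram.exists_card_add_le (hu : IsDiagram N w u) (hy : 0 ≤ y)
    (h0 : u 0 ≤ max (L - y) 0) (hpos : ∃ i < N, 0 < excess L u i) :
    ∃ j ≤ N, y < j ∧ #(protruding N L u) + 1 + max (L - w) 0 ≤ u j := by
  have hanti := fun i => hu.antitone (Nat.zero_le i)
  rcases (protruding N L u).eq_empty_or_nonempty with hX | hX
  · obtain ⟨j, hjN, hj⟩ := hpos
    have hjX : j ∉ protruding N L u := by simp [hX]
    have := hanti j
    have := hu.lt_of_pos (i := j) hjN.le
    rw [mem_protruding] at hjX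
    unfold excess at hj
    refine ⟨j, hjN.le, ?_, ?_⟩
    · rcases Nat.eq_zero_or_pos j with rfl | h <;> omega
    · rw [hX, card_empty]
      rcases Nat.eq_zero_or_pos j with rfl | h <;> omega
  · have hmin := min'_mem _ hX
    have hall : {h ∈ protruding N L u | (protruding N L u).min' hX ≤ h} = protruding N L u :=
      filter_true_of_mem fun i hi => min'_le _ _ hi
    have hcard := hu.card_filter_ge_add_le hmin
    rw [hall] at hcard
    rw [mem_protruding] at hmin
    have := hanti ((protruding N L u).min' hX)
    exact ⟨_, hmin.1.2, by omega, by omega⟩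

lemma IsDiagram.le_two_mul_sum_inside (hu : IsDiagram N w u) (hy : 0 ≤ y)
    (h0 : u 0 ≤ max (L - y) 0) (hpos : ∃ i < N, 0 < excess L u i) :
    #(protruding N L u) * (#(protruding N L u) + 1) + 2 * (#(protruding N L u) * max (L - w) 0)
      + 2 * (y * (#(protruding N L u) + 1 + max (L - w) 0))
      ≤ 2 * ∑ i ∈ range N, inside L u (i + 1) := by
  obtain ⟨j, hjN, hyj, hj⟩ := hu.exists_card_add_le hy h0 hpos
  have hanti := fun i => hu.antitone (Nat.zero_le i)
  have hdisj : Disjoint (protruding N L u) (Ioc 0 y.toNat) := by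
    refine disjoint_left.2 fun i hi hi' => ?_
    rw [mem_protruding] at hi
    rw [mem_Ioc] at hi'
    have := hanti i
    omega
  have hsub : protruding N L u ∪ Ioc 0 y.toNat ⊆ Ioc 0 N := by
    refine union_subset (filter_subset _ _) fun i hi => ?_
    rw [mem_Ioc] at hi ⊢
    omega
  have hfirst : y * (#(protruding N L u) + 1 + max (L - w) 0)
      ≤ ∑ i ∈ Ioc 0 y.toNat, inside L u i := by
    calc y * (#(protruding N L u) + 1 + max (L - w) 0)
        = ∑ _i ∈ Ioc 0 y.toNat, (#(protruding N L u) + 1 + max (L - w) 0) := by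
          rw [sum_const, Nat.card_Ioc, nsmul_eq_mul, Nat.sub_zero, Int.toNat_of_nonneg hy]
      _ ≤ _ := sum_le_sum fun i hi => by
          rw [mem_Ioc] at hi
          have := hu.antitone (show i ≤ j by omega)
          have := hanti j
          unfold inside
          omega
  have := hu.sum_inside_le (L := L) hsub
  rw [sum_union hdisj] at this
  linarith [hu.le_two_mul_sum_inside_protruding (L := L)]

lemma sum_excess_le_sum_inside_or_of_excess_pos (hu : IsDiagram N w u) (ht : IsDiagram N w' t)
    (hw : (w + w' : ℤ) ≤ L + L') (hy : 0 ≤ y) (hu0 : u 0 ≤ max (L + y) 0)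
    (ht0 : t 0 ≤ max (L' - y) 0) (hpos : ∃ i < N, 0 < excess L' t i) :
    ∑ i ∈ range N, excess L u i ≤ ∑ i ∈ range N, inside L' t (i + 1) ∨
      ∑ i ∈ range N, excess L' t i ≤ ∑ i ∈ range N, inside L u (i + 1) := by
  have hu_out := hu.two_mul_sum_excess_le hy hu0
  have ht_out := ht.two_mul_sum_excess_le (L := L') le_rfl (by omega)
  have hu_in := (hu.le_two_mul_sum_inside_protruding (L := L)).trans
    (mul_le_mul_of_nonneg_left (hu.sum_inside_le (filter_subset _ _)) zero_le_two)
  have ht_in := ht.le_two_mul_sum_inside hy ht0 hpos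
  set R : ℤ := ((#(protruding N L u) : ℕ) : ℤ)
  set ρ : ℤ := ((#(protruding N L' t) : ℕ) : ℤ)
  have hR : 0 ≤ R := by positivity
  have hρ : 0 ≤ ρ := by positivity
  have hκ : max ((w : ℤ) - L) 0 ≤ max (L' - w') 0 := by omega
  have hκ' : max ((w' : ℤ) - L') 0 ≤ max (L - w) 0 := by omega
  have hone : max ((w : ℤ) - L) 0 = 0 ∨ max ((w' : ℤ) - L') 0 = 0 := by omega
  set κ := max ((w : ℤ) - L) 0
  set κ' := max ((w' : ℤ) - L') 0
  have hκ0 : 0 ≤ κ := le_max_right _ _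
  have hκ'0 : 0 ≤ κ' := le_max_right _ _
  -- The part of the diagram with fewer protruding columns that lies outside its staircase fits
  -- inside the other diagram.
  rcases lt_trichotomy R ρ with h | h | h
  · left
    nlinarith [mul_le_mul hκ h (by linarith) (hκ0.trans hκ), mul_nonneg hy (sub_nonneg.2 hκ)]
  · rw [← h] at ht_out ht_in
    rcases hone with h' | h'
    · left
      rw [h'] at hu_out
      nlinarith [mul_nonneg hy (hκ0.trans hκ), mul_nonneg hR (hκ0.trans hκ)]
    · right
      rw [h'] at ht_out
      nlinarith [mul_nonneg hR (hκ'0.trans hκ')]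
  · right
    nlinarith [mul_nonneg hR (sub_nonneg.2 hκ'), mul_nonneg hκ'0 (sub_nonneg.2 h.le)]

lemma sum_excess_le_sum_inside_or_of_nonneg (hu : IsDiagram N w u) (ht : IsDiagram N w' t)
    (hw : (w + w' : ℤ) ≤ L + L') (hy : 0 ≤ y) (hu0 : u 0 ≤ max (L + y) 0)
    (ht0 : t 0 ≤ max (L' - y) 0) :
    ∑ i ∈ range N, excess L u i ≤ ∑ i ∈ range N, inside L' t (i + 1) ∨
      ∑ i ∈ range N, excess L' t i ≤ ∑ i ∈ range N, inside L u (i + 1) := by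
  by_cases hpos : ∃ i < N, 0 < excess L' t i
  · exact sum_excess_le_sum_inside_or_of_excess_pos hu ht hw hy hu0 ht0 hpos
  · push Not at hpos
    exact .inr ((sum_nonpos fun i hi => hpos i (mem_range.1 hi)).trans
      (sum_nonneg fun i _ => hu.inside_nonneg _))

lemma sum_excess_le_sum_inside_or (hu : IsDiagram N w u) (ht : IsDiagram N w' t)
    (hw : (w + w' : ℤ) ≤ L + L') (hu0 : u 0 ≤ max (L + y) 0) (ht0 : t 0 ≤ max (L' - y) 0) :
    ∑ i ∈ range N, excess L u i ≤ ∑ i ∈ range N, inside L' t (i + 1) ∨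
      ∑ i ∈ range N, excess L' t i ≤ ∑ i ∈ range N, inside L u (i + 1) := by
  rcases le_total 0 y with hy | hy
  · exact sum_excess_le_sum_inside_or_of_nonneg hu ht hw hy hu0 ht0
  · exact (sum_excess_le_sum_inside_or_of_nonneg ht hu (by linarith) (neg_nonneg.2 hy)
      (by simpa [← sub_eq_add_neg] using ht0) (by simpa using hu0)).symm

end Diagrams

section Profiles

/-- A sequence whose window at `T`, the list of the `B (T + i) + i` for `i < n`, gives in increasing
order the chip counts on an attached `K_n` of a divisor in a fixed class, the new vertices being
taken in a suitable order. Raising `T` by one is the inverse of a chip-firing move: the first vertex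
of the window receives `k + n` chips and becomes the last, the others lose one chip each. -/
structure IsProfile (n k : ℕ) (B : ℤ → ℤ) : Prop where
  monotone_add_self : Monotone fun m => B m + m
  apply_add : ∀ m, B (m + n) = B m + k + 1

/-- The number of chips of the window at `T` above the thresholds `k + i`; up to `k + i` chips at
the `i`-th new vertex are of no use to `G'`. -/
def overflow (n k : ℕ) (B : ℤ → ℤ) (T : ℤ) : ℤ := ∑ i ∈ range n, max (B (T + i) - k) 0

/-- The number of chips of the window at `T` up to the thresholds `k + i`, not counting the
offsets `i`. -/
def capped (n k : ℕ) (B : ℤ → ℤ) (T : ℤ) : ℤ := ∑ i ∈ range n, min (B (T + i)) k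

/-- The number of chips that the `i`-th entries of the window at `T` lack to reach `i - 1`. -/
def deficit (n : ℕ) (B : ℤ → ℤ) (T : ℤ) : ℤ := ∑ i ∈ range n, max (-(B (T + i) + 1)) 0

/-- The growth of `overflow` when the window moves from `m` to `m + 1`. -/
def gain (k : ℕ) (B : ℤ → ℤ) (m : ℤ) : ℤ := max 0 (min (B m + 1) (k + 1))

/-- The column heights of the diagram between the window at `S` and the constant level `l` above
it, read forwards from the start of the window. -/
def shortfall (B : ℤ → ℤ) (l S : ℤ) (i : ℕ) : ℤ := max (l - B (S + i) - i) 0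

/-- The column heights of the diagram between the window at `S` and the constant level `l` below
it, read backwards from the position following the window. -/
def surplus (n : ℕ) (B : ℤ → ℤ) (l S : ℤ) (j : ℕ) : ℤ := max (B (S + (n - j)) + (n - j) - l) 0

lemma sum_window_succ (g : ℤ → ℤ) (n : ℕ) (T : ℤ) :
    ∑ i ∈ range n, g (T + 1 + i) = ∑ i ∈ range n, g (T + i) + (g (T + n) - g T) := by
  have h := sum_range_succ' (fun i : ℕ => g (T + i)) n
  rw [sum_range_succ] at h
  simp only [Nat.cast_add, Nat.cast_one, Nat.cast_zero, add_zero] at h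
  simp only [add_assoc T 1, add_comm (1 : ℤ)]
  linarith

namespace IsProfile

variable {n k : ℕ} {B : ℤ → ℤ}

lemma le_add_of_le (hB : IsProfile n k B) {a b : ℤ} (h : a ≤ b) : B a + a ≤ B b + b :=
  hB.monotone_add_self h

lemma overflow_succ (hB : IsProfile n k B) (T : ℤ) :
    overflow n k B (T + 1) = overflow n k B T + gain k B T := by
  have h := sum_window_succ (fun m => max (B m - k) 0) n T
  have := hB.apply_add T
  simp only [overflow, gain, h]
  omega

lemma capped_succ (hB : IsProfile n k B) (T : ℤ) :
    capped n k B (T + 1) = capped n k B T + (k + 1 - gain k B T) := by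
  have h := sum_window_succ (fun m => min (B m) k) n T
  have := hB.apply_add T
  simp only [capped, gain, h]
  omega

lemma overflow_add (hB : IsProfile n k B) (T : ℤ) (p : ℕ) :
    overflow n k B (T + p) = overflow n k B T + ∑ i ∈ range p, gain k B (T + i) := by
  induction p with
  | zero => simp
  | succ p ih => rw [Nat.cast_succ, ← add_assoc, hB.overflow_succ, ih, sum_range_succ, add_assoc]

lemma capped_add (hB : IsProfile n k B) (T : ℤ) (p : ℕ) :
    capped n k B (T + p) = capped n k B T + ∑ i ∈ range p, (k + 1 - gain k B (T + i)) := by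
  induction p with
  | zero => simp
  | succ p ih => rw [Nat.cast_succ, ← add_assoc, hB.capped_succ, ih, sum_range_succ, add_assoc]

lemma capped_add_period (hB : IsProfile n k B) (T : ℤ) :
    capped n k B (T + n) = n * k - deficit n B T := by
  have h : ∀ i ∈ range n, min (B (T + n + i)) k = k - max (-(B (T + i) + 1)) 0 := fun i _ => by
    have := hB.apply_add (T + i)
    rw [add_right_comm]
    omega
  rw [capped, sum_congr rfl h, sum_sub_distrib, sum_const, card_range, nsmul_eq_mul, deficit]

lemma monotone_gain_add (hB : IsProfile n k B) (S : ℤ) :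
    Monotone fun i : ℕ => gain k B (S + i) + i := fun i j hij => by
  have := hB.le_add_of_le (show S + i ≤ S + j by omega)
  simp only [gain]
  omega

lemma exists_isDiagram (hB : IsProfile n k B) (l S : ℤ) :
    ∃ q ≤ n + 1, IsDiagram n q (shortfall B l S) ∧ IsDiagram n (n + 1 - q) (surplus n B l S) := by
  obtain ⟨q, hqn, hq⟩ := exists_threshold (f := fun i : ℕ => B (S + i) + i + 1)
    (fun i j hij => by have := hB.le_add_of_le (show S + i ≤ S + j by omega); dsimp; omega)
    l (n + 1)
  refine ⟨q, hqn, ⟨fun i j hij => ?_, fun _ => le_max_right _ _, fun i hqi hi => ?_, hqn⟩,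
    ⟨fun i j hij => ?_, fun _ => le_max_right _ _, fun j hqj hj => ?_, by omega⟩⟩
  · have := hB.le_add_of_le (show S + i ≤ S + j by omega)
    unfold shortfall
    omega
  · have := hq i
    unfold shortfall
    omega
  · have := hB.le_add_of_le (show S + (n - j) ≤ S + (n - i) by omega)
    unfold surplus
    omega
  · have := hq (n - j)
    rw [Nat.cast_sub hj] at this
    unfold surplus
    omega

lemma sum_inside_surplus_add_deficit (n k : ℕ) (B : ℤ → ℤ) (l S : ℤ) :
    ∑ i ∈ range n, inside (n + k - l) (surplus n B l S) (i + 1) + deficit n B S =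
      ∑ i ∈ range n, max (gain k B (S + i) + i - (l + 1)) 0
        + ∑ i ∈ range n, excess (l + 1) (shortfall B l S) i := by
  rw [sum_range_succ_reflect, deficit, ← sum_add_distrib, ← sum_add_distrib]
  refine sum_congr rfl fun i hi => ?_
  have hin := mem_range.1 hi
  simp only [inside, excess, gain, surplus, shortfall, Nat.cast_sub hin.le, sub_sub_cancel]
  omega

lemma sum_inside_shortfall_add_overflow (n k : ℕ) (B : ℤ → ℤ) (l S : ℤ) :
    ∑ i ∈ range n, inside (l + 1) (shortfall B l S) (i + 1) + overflow n k B (S + 1) =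
      ∑ i ∈ range n, max (l - (gain k B (S + 1 + i) + i)) 0
        + ∑ i ∈ range n, excess (n + k - l) (surplus n B l S) i := by
  rw [← sum_range_reflect (excess _ _), overflow, ← sum_add_distrib, ← sum_add_distrib]
  refine sum_congr rfl fun i hi => ?_
  have hin := mem_range.1 hi
  have hsub : ((n - 1 - i : ℕ) : ℤ) = n - 1 - i := by omega
  simp only [inside, excess, gain, surplus, shortfall, hsub, Nat.cast_add, Nat.cast_one,
    show S + (n - (n - 1 - i : ℤ)) = S + 1 + i by ring, show S + (i + 1 : ℤ) = S + 1 + i by ring]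
  omega

lemma overflow_succ_le_or_deficit_le (hB : IsProfile n k B) (l S : ℤ) :
    overflow n k B (S + 1) ≤ ∑ i ∈ range n, max (l - (gain k B (S + 1 + i) + i)) 0 ∨
      deficit n B S ≤ ∑ i ∈ range n, max (gain k B (S + i) + i - (l + 1)) 0 := by
  obtain ⟨q, hqn, hshort, hsurp⟩ := hB.exists_isDiagram l S
  have hdef := sum_inside_surplus_add_deficit n k B l S
  have hover := sum_inside_shortfall_add_overflow n k B l S
  have hper := hB.apply_add S
  have hshort0 : shortfall B l S 0 ≤ max (l + 1 + (-B S - 1)) 0 := by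
    simp only [shortfall, Nat.cast_zero, add_zero]
    omega
  have hsurp0 : surplus n B l S 0 ≤ max (n + k - l - (-B S - 1)) 0 := by
    simp only [surplus, Nat.cast_zero, sub_zero]
    omega
  rcases sum_excess_le_sum_inside_or hshort hsurp (by omega) hshort0 hsurp0 with h | h
  · right; linarith
  · left; linarith

lemma apply_int_mul (hB : IsProfile n k B) (z : ℤ) : B (z * n) = B 0 + z * (k + 1) := by
  induction z using Int.induction_on with
  | zero => simp
  | succ z ih => rw [add_one_mul, hB.apply_add, ih]; ring
  | pred z ih =>
    have := hB.apply_add ((-z - 1) * n)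
    rw [show (-z - 1 : ℤ) * n + n = -z * n by ring, ih] at this
    linarith

lemma exists_balanced (hB : IsProfile n k B) (l : ℤ) :
    ∃ S, overflow n k B S ≤ ∑ i ∈ range n, max (l - (gain k B (S + i) + i)) 0 ∧
      deficit n B S ≤ ∑ i ∈ range n, max (gain k B (S + i) + i - (l + 1)) 0 := by
  have hnonneg : ∀ g : ℕ → ℤ, 0 ≤ ∑ i ∈ range n, max (g i) 0 := fun g =>
    sum_nonneg fun i _ => le_max_right _ _
  set z := |B 0| + n + 1
  have hz0 : z * 1 ≤ z * (k + 1) := mul_le_mul_of_nonneg_left (by omega) (by positivity)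
  have hz := hB.apply_int_mul z
  have hz' := hB.apply_int_mul (-z)
  have habs := abs_le.1 (le_refl |B 0|)
  have h_start : overflow n k B (-z * n) = 0 := sum_eq_zero fun i hi => by
    have := hB.le_add_of_le (show -z * n + i ≤ -z * n + n by linarith [mem_range.1 hi])
    have := hB.apply_add (-z * n)
    have := mem_range.1 hi
    have := neg_mul z (k + 1)
    omega
  have h_end : deficit n B (z * n) = 0 := sum_eq_zero fun i hi => by
    have := hB.le_add_of_le (show z * n ≤ z * n + i by omega)
    have := mem_range.1 hi
    omega
  obtain ⟨S, ⟨hS_start, hS⟩, hleast⟩ := Int.exists_least_of_bdd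
    (P := fun S => -z * n ≤ S ∧
      deficit n B S ≤ ∑ i ∈ range n, max (gain k B (S + i) + i - (l + 1)) 0)
    ⟨-z * n, fun _ h => h.1⟩ ⟨z * n, by nlinarith, h_end ▸ hnonneg _⟩
  refine ⟨S, ?_, hS⟩
  rcases hS_start.eq_or_lt with rfl | hlt
  · exact h_start ▸ hnonneg _
  · have hpred := hB.overflow_succ_le_or_deficit_le l (S - 1)
    rw [sub_add_cancel] at hpred
    exact hpred.resolve_right fun h => by linarith [hleast (S - 1) ⟨by linarith, h⟩]

lemma exists_window (hB : IsProfile n k B) (l : ℤ) :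
    ∃ (T : ℤ) (p : ℕ), overflow n k B T ≤ ∑ i ∈ range p, (l - i) ∧
      l * (k + n) ≤ capped n k B T + ∑ i ∈ range n, (i : ℤ) + ∑ i ∈ range p, (l - i)
        + (l - p) * k := by
  obtain ⟨S, hover, hdef⟩ := hB.exists_balanced l
  obtain ⟨p, hpn, hp⟩ := exists_threshold (hB.monotone_gain_add S) l n
  rw [sum_max_sub_eq_of_threshold hpn hp] at hover
  rw [sum_max_sub_add_one_eq_of_threshold hpn hp] at hdef
  simp only [sum_sub_distrib, sum_add_distrib, sum_const, card_range, Nat.card_Ico, nsmul_eq_mul,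
    Nat.cast_sub hpn] at hover hdef
  refine ⟨S + p, p, ?_, ?_⟩
  · rw [hB.overflow_add, sum_sub_distrib, sum_const, card_range, nsmul_eq_mul]
    linarith
  · have hcap := hB.capped_add S n
    have hcap' := hB.capped_add S p
    have hid := sum_range_add_sum_Ico (fun i : ℕ => (i : ℤ)) hpn
    rw [hB.capped_add_period, ← sum_range_add_sum_Ico _ hpn] at hcap
    simp only [sum_sub_distrib, sum_const, card_range, Nat.card_Ico, nsmul_eq_mul,
      Nat.cast_sub hpn] at hcap hcap' ⊢
    linarith

end IsProfile

end Profiles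

lemma exists_forall_le_and_lt_of_lt {α β γ : Type*} [Finite α] [Nonempty α] [LinearOrder β]
    [LinearOrder γ] (f : α → β) (φ : α → γ) :
    ∃ w, ∀ u, f u ≤ f w ∧ (φ u < φ w → f u < f w) := by
  obtain ⟨w, hmax⟩ := Finite.exists_max fun u => toLex (f u, OrderDual.toDual (φ u))
  refine ⟨w, fun u => ?_⟩
  rcases Prod.Lex.toLex_le_toLex.1 (hmax u) with h | ⟨h, hφ⟩
  · exact ⟨h.le, fun _ => h⟩
  · exact ⟨h.le, fun hlt => absurd hlt (not_lt_of_ge hφ)⟩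

namespace Multigraph

section Divisors

lemma degree_add {α : Type*} [Fintype α] (D E : α → ℤ) : degree (D + E) = degree D + degree E :=
  sum_add_distrib

lemma degree_sub {α : Type*} [Fintype α] (D E : α → ℤ) : degree (D - E) = degree D - degree E :=
  sum_sub_distrib ..

lemma degree_single (v : V) (c : ℤ) : degree (Pi.single v c) = c := by
  simp [degree]

lemma effective_single {α : Type*} [DecidableEq α] (v : α) {c : ℤ} (hc : 0 ≤ c) :
    Effective (Pi.single v c) := by
  intro w
  by_cases h : w = v <;> simp [h, hc]

lemma Effective.add {α : Type*} {D E : α → ℤ} (hD : Effective D) (hE : Effective E) :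
    Effective (D + E) :=
  fun v => add_nonneg (hD v) (hE v)

lemma Effective.degree_nonneg {α : Type*} [Fintype α] {D : α → ℤ} (hD : Effective D) :
    0 ≤ degree D :=
  sum_nonneg fun v _ => hD v

variable (G : Multigraph V) {D E : V → ℤ}

lemma laplacian_add (f g : V → ℤ) : G.laplacian (f + g) = G.laplacian f + G.laplacian g := by
  ext w
  simp only [laplacian, Pi.add_apply, ← sum_add_distrib]
  exact sum_congr rfl fun u _ => by ring

lemma laplacian_smul (c : ℤ) (f : V → ℤ) : G.laplacian (c • f) = c • G.laplacian f := by
  ext w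
  simp only [laplacian, Pi.smul_apply, smul_eq_mul, mul_sum]
  exact sum_congr rfl fun u _ => by ring

lemma laplacian_neg (f : V → ℤ) : G.laplacian (-f) = -G.laplacian f := by
  simpa using G.laplacian_smul (-1) f

lemma degree_laplacian (f : V → ℤ) : degree (G.laplacian f) = 0 := by
  have h : degree (G.laplacian f) = -degree (G.laplacian f) := by
    simp only [degree, laplacian]
    nth_rewrite 1 [sum_comm]
    simp only [← sum_neg_distrib]
    exact sum_congr rfl fun u _ => sum_congr rfl fun w _ => by rw [G.symm]; ring
  linarith

lemma degree_sub_laplacian (f : V → ℤ) : degree (D - G.laplacian f) = degree D := by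
  rw [degree_sub, degree_laplacian, sub_zero]

lemma winnable_iff : G.Winnable D ↔ ∃ f, Effective (D - G.laplacian f) := by
  simp only [Winnable, LinEquiv]
  exact ⟨fun ⟨_, hE, f, hf⟩ => ⟨f, hf ▸ hE⟩, fun ⟨f, hf⟩ => ⟨_, hf, f, rfl⟩⟩

variable {G}

lemma Winnable.of_sub_laplacian {f : V → ℤ} (h : G.Winnable (D - G.laplacian f)) :
    G.Winnable D := by
  obtain ⟨g, hg⟩ := G.winnable_iff.1 h
  exact G.winnable_iff.2 ⟨f + g, by rwa [laplacian_add, ← sub_sub]⟩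

lemma Winnable.sub_laplacian (h : G.Winnable D) (f : V → ℤ) :
    G.Winnable (D - G.laplacian f) :=
  .of_sub_laplacian (f := -f) (by rwa [laplacian_neg, sub_neg_eq_add, sub_add_cancel])

lemma Winnable.add_effective (h : G.Winnable D) (hE : Effective E) : G.Winnable (D + E) := by
  obtain ⟨f, hf⟩ := G.winnable_iff.1 h
  exact G.winnable_iff.2 ⟨f, by rw [add_sub_right_comm]; exact hf.add hE⟩

lemma Winnable.degree_nonneg (h : G.Winnable D) : 0 ≤ degree D := by
  obtain ⟨f, hf⟩ := G.winnable_iff.1 h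
  exact G.degree_sub_laplacian f ▸ hf.degree_nonneg

end Divisors

section Rank

/-- `G.RankGe D r` says that `D` has rank at least `r`, without the supremum in `rank`;
it holds vacuously for negative `r`. -/
def RankGe (G : Multigraph V) (D : V → ℤ) (r : ℤ) : Prop :=
  ∀ E : V → ℤ, Effective E → degree E = r → G.Winnable (D - E)

variable {G : Multigraph V} {D E : V → ℤ} {r s : ℤ}

lemma RankGe.sub_effective (h : G.RankGe D r) (hE : Effective E) :
    G.RankGe (D - E) (r - degree E) := fun E' hE' hdeg => by
  rw [sub_sub]
  exact h _ (hE.add hE') (by rw [degree_add, hdeg, add_sub_cancel])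

lemma RankGe.sub_laplacian (h : G.RankGe D r) (f : V → ℤ) :
    G.RankGe (D - G.laplacian f) r := fun E hE hdeg => by
  rw [sub_right_comm]
  exact (h E hE hdeg).sub_laplacian f

variable [Nonempty V]

lemma RankGe.le_degree (h : G.RankGe D r) (hr : 0 ≤ r) : r ≤ degree D := by
  have v := Classical.arbitrary V
  have := (h _ (effective_single v hr) (degree_single v r)).degree_nonneg
  rwa [degree_sub, degree_single, sub_nonneg] at this

lemma RankGe.mono (h : G.RankGe D s) (hrs : r ≤ s) : G.RankGe D r := fun E hE hdeg => by
  have v := Classical.arbitrary V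
  have hextra : Effective (Pi.single v (s - r)) := effective_single v (sub_nonneg.2 hrs)
  have := h _ (hE.add hextra) (by rw [degree_add, degree_single, hdeg, add_sub_cancel])
  simpa [← sub_sub] using this.add_effective hextra

lemma bddAbove_rankGe (G : Multigraph V) (D : V → ℤ) : BddAbove {r | G.RankGe D r} :=
  ⟨max (degree D) 0, fun r hr => by
    rcases le_total 0 r with h | h
    · exact le_max_of_le_left (RankGe.le_degree hr h)
    · exact le_max_of_le_right h⟩

lemma le_rank_iff : r ≤ G.rank D ↔ G.RankGe D r := by
  have hneg : (-1 : ℤ) ∈ {r | G.RankGe D r} := fun E hE hdeg => by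
    have := hE.degree_nonneg
    omega
  exact ⟨fun h => (Int.csSup_mem ⟨_, hneg⟩ (bddAbove_rankGe G D) : G.RankGe D (G.rank D)).mono h,
    fun h => le_csSup (bddAbove_rankGe G D) h⟩

lemma isLeast_gonality (hr : 0 ≤ r) (hD : G.RankGe D r) :
    IsLeast {d | ∃ D, G.RankGe D r ∧ degree D = d} (G.gonality r) := by
  obtain ⟨d, ⟨D₀, hD₀, rfl⟩, hmin⟩ := Int.exists_least_of_bdd
    (P := fun d => ∃ D, G.RankGe D r ∧ degree D = d)
    ⟨r, fun d ⟨D, h, hd⟩ => hd ▸ h.le_degree hr⟩ ⟨_, D, hD, rfl⟩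
  have hrank : G.rank D₀ = r := by
    refine le_antisymm (not_lt.1 fun hlt => ?_) (le_rank_iff.2 hD₀)
    have v := Classical.arbitrary V
    have h := (le_rank_iff.1 (Int.add_one_le_of_lt hlt)).sub_effective
      (effective_single v zero_le_one)
    rw [degree_single, add_sub_cancel_right] at h
    have := hmin _ ⟨_, h, rfl⟩
    rw [degree_sub, degree_single] at this
    omega
  have hgon : G.gonality r = degree D₀ :=
    IsLeast.csInf_eq ⟨⟨D₀, hrank, rfl⟩, fun d ⟨D, h, hd⟩ => hmin d ⟨D, le_rank_iff.1 h.ge, hd⟩⟩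
  exact hgon ▸ ⟨⟨D₀, hD₀, rfl⟩, hmin⟩

end Rank

section Reduced

variable {G : Multigraph V} {D f : V → ℤ} {v : V}

lemma Connected.le_of_laplacian_nonpos (hG : G.Connected) (hf : ∀ w, w ≠ v → G.laplacian f w ≤ 0)
    (w : V) : f w ≤ f v := by
  obtain ⟨a, -, hmax⟩ := exists_max_image univ f ⟨v, mem_univ v⟩
  have hpropagate : ∀ b, f b = f a → f v = f a := fun b => by
    refine Relation.ReflTransGen.head_induction_on (hG.2 b v) id fun {b c} hbc _ ih hb => ?_
    by_cases hbv : b = v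
    · exact hbv ▸ hb
    have hterm : ∀ u ∈ univ, 0 ≤ (G.mult b u : ℤ) * (f b - f u) := fun u hu =>
      mul_nonneg (Nat.cast_nonneg _) (by linarith [hmax u hu])
    have hzero := (sum_eq_zero_iff_of_nonneg hterm).1
      (le_antisymm (hf b hbv) (sum_nonneg hterm)) c (mem_univ c)
    have hne : (G.mult b c : ℤ) ≠ 0 := Nat.cast_ne_zero.2 (Nat.pos_iff_ne_zero.1 hbc)
    have := (mul_eq_zero.1 hzero).resolve_left hne
    exact ih (by linarith)
  exact hpropagate a rfl ▸ hmax w (mem_univ w)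

/-- The Laplacian with the equation at `v` replaced by evaluation at `v`, which makes it
injective on a connected graph. -/
def groundedLaplacian (G : Multigraph V) (v : V) : (V → ℤ) →ₗ[ℤ] (V → ℤ) where
  toFun f w := if w = v then f v else G.laplacian f w
  map_add' f g := by
    ext w
    by_cases h : w = v <;> simp [h, laplacian_add]
  map_smul' c f := by
    ext w
    by_cases h : w = v <;> simp only [h, if_true, if_false, laplacian_smul, Pi.smul_apply,
      RingHom.id_apply]

lemma Connected.groundedLaplacian_injective (hG : G.Connected) (v : V) :
    Function.Injective (G.groundedLaplacian v) := by
  rw [injective_iff_map_eq_zero]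
  intro f hf
  have hv : f v = 0 := by simpa [groundedLaplacian] using congrFun hf v
  have hoff : ∀ w, w ≠ v → G.laplacian f w = 0 := fun w hw => by
    simpa [groundedLaplacian, hw] using congrFun hf w
  ext w
  have hle := hG.le_of_laplacian_nonpos (fun w hw => (hoff w hw).le) w
  have hge := hG.le_of_laplacian_nonpos (f := -f)
    (fun w hw => by rw [laplacian_neg, Pi.neg_apply, hoff w hw, neg_zero]) w
  simp only [Pi.neg_apply, Pi.zero_apply] at hge ⊢
  omega

lemma Connected.exists_one_le_laplacian (hG : G.Connected) (v : V) :
    ∃ f : V → ℤ, f v = 0 ∧ ∀ w, w ≠ v → 1 ≤ G.laplacian f w := by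
  set M := LinearMap.toMatrix' (G.groundedLaplacian v) with hM
  have hdet : M.det ≠ 0 := fun h => by
    obtain ⟨f, hf, hMf⟩ := Matrix.exists_mulVec_eq_zero_iff.2 h
    rw [hM, LinearMap.toMatrix'_mulVec] at hMf
    exact hf (hG.groundedLaplacian_injective v (hMf.trans (map_zero _).symm))
  set b : V → ℤ := fun w => if w = v then 0 else 1 with hb
  refine ⟨M.det • M.adjugate.mulVec b, ?_⟩
  have hsolve : G.groundedLaplacian v (M.det • M.adjugate.mulVec b) = (M.det * M.det) • b := by
    rw [map_smul, ← LinearMap.toMatrix'_mulVec, ← hM, Matrix.mulVec_mulVec, Matrix.mul_adjugate,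
      Matrix.smul_mulVec, Matrix.one_mulVec, smul_smul]
  refine ⟨by simpa [groundedLaplacian, hb] using congrFun hsolve v, fun w hw => ?_⟩
  have hw' := congrFun hsolve w
  simp only [groundedLaplacian, LinearMap.coe_mk, AddHom.coe_mk, if_neg hw, hb, Pi.smul_apply,
    smul_eq_mul, mul_one] at hw'
  rw [hw']
  exact Int.add_one_le_of_lt (mul_self_pos.2 hdet)

lemma laplacian_indicator_of_mem (G : Multigraph V) {U : Finset V} {w : V} (hw : w ∈ U) :
    G.laplacian (fun u => if u ∈ U then 1 else 0) w = ∑ u ∈ Uᶜ, (G.mult w u : ℤ) := by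
  simp only [laplacian, if_pos hw, ← sum_compl_add_sum U]
  rw [sum_eq_zero (s := U) fun u hu => by simp [hu], add_zero]
  exact sum_congr rfl fun u hu => by simp [mem_compl.1 hu]

lemma laplacian_indicator_nonpos_of_notMem (G : Multigraph V) {U : Finset V} {w : V}
    (hw : w ∉ U) : G.laplacian (fun u => if u ∈ U then 1 else 0) w ≤ 0 :=
  sum_nonpos fun u _ => mul_nonpos_of_nonneg_of_nonpos (Nat.cast_nonneg _) (by
    simp only [if_neg hw]
    split_ifs <;> norm_num)

lemma Connected.exists_sub_laplacian_nonneg_off (hG : G.Connected) (D : V → ℤ) (v : V) :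
    ∃ f : V → ℤ, f v = 0 ∧ ∀ w, w ≠ v → 0 ≤ (D - G.laplacian f) w := by
  obtain ⟨f₀, hf₀v, hf₀⟩ := hG.exists_one_le_laplacian v
  have hc : ∀ w, |D w| ≤ ∑ u, |D u| := fun w =>
    single_le_sum (fun u _ => abs_nonneg (D u)) (mem_univ w)
  refine ⟨(-∑ u, |D u|) • f₀, by simp [hf₀v], fun w hw => ?_⟩
  have := le_mul_of_one_le_right ((abs_nonneg _).trans (hc v)) (hf₀ w hw)
  rw [laplacian_smul, Pi.sub_apply, Pi.smul_apply, smul_eq_mul]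
  linarith [neg_abs_le (D w), hc w]

lemma Connected.exists_sum_le (hG : G.Connected) (D : V → ℤ) (v : V) :
    ∃ c, ∀ f : V → ℤ, f v = 0 → (∀ w, w ≠ v → 0 ≤ (D - G.laplacian f) w) → ∑ w, f w ≤ c := by
  obtain ⟨g, hgv, hg⟩ := hG.exists_sub_laplacian_nonneg_off (-D) v
  refine ⟨-∑ w, g w, fun f hfv hf => ?_⟩
  have hle : ∀ w, (f + g) w ≤ 0 := fun w => by
    have := hG.le_of_laplacian_nonpos (v := v) (f := f + g) (fun w hw => ?_) w
    · simpa [hfv, hgv] using this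
    · have := hf w hw
      have := hg w hw
      simp only [laplacian_add, Pi.add_apply, Pi.sub_apply, Pi.neg_apply] at *
      linarith
  have := sum_nonpos fun w (_ : w ∈ univ) => hle w
  simp only [Pi.add_apply, sum_add_distrib] at this
  linarith

lemma Connected.exists_reduced (hG : G.Connected) (D : V → ℤ) (v : V) :
    ∃ f, G.Reduced v (D - G.laplacian f) := by
  obtain ⟨c, hc⟩ := hG.exists_sum_le D v
  obtain ⟨f₀, hf₀v, hf₀⟩ := hG.exists_sub_laplacian_nonneg_off D v
  obtain ⟨-, ⟨f, hfv, hf, rfl⟩, hmax⟩ := Int.exists_greatest_of_bdd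
    (P := fun m => ∃ f, f v = 0 ∧ (∀ w, w ≠ v → 0 ≤ (D - G.laplacian f) w) ∧ ∑ w, f w = m)
    ⟨c, fun m ⟨f, hfv, hf, hm⟩ => hm ▸ hc f hfv hf⟩ ⟨_, f₀, hf₀v, hf₀, rfl⟩
  refine ⟨f, hf, fun U hU hvU => ?_⟩
  by_contra! hlegal
  set g : V → ℤ := fun u => if u ∈ U then 1 else 0 with hg
  have hsum : ∑ w, (f + g) w = ∑ w, f w + #U := by
    simp [sum_add_distrib, hg]
  have := hmax _ ⟨f + g, by simp [hfv, hg, hvU], fun w hw => ?_, rfl⟩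
  · have := hU.card_pos
    omega
  · rw [laplacian_add, ← sub_sub, Pi.sub_apply]
    by_cases hwU : w ∈ U
    · rw [hg, G.laplacian_indicator_of_mem hwU]
      exact hlegal w hwU
    · linarith [hf w hw, G.laplacian_indicator_nonpos_of_notMem hwU]

end Reduced

section RiemannRoch

variable {G : Multigraph V} {D : V → ℤ} {v : V}

lemma sum_insert_mult (G : Multigraph V) {U : Finset V} {w : V} (hw : w ∉ U) :
    ∑ x ∈ insert w U, ∑ y ∈ insert w U, (G.mult x y : ℤ) =
      ∑ x ∈ U, ∑ y ∈ U, (G.mult x y : ℤ) + 2 * ∑ y ∈ U, (G.mult w y : ℤ) := by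
  have hsymm : ∑ x ∈ U, (G.mult x w : ℤ) = ∑ y ∈ U, (G.mult w y : ℤ) :=
    sum_congr rfl fun x _ => by rw [G.symm]
  simp only [sum_insert hw, sum_add_distrib, hsymm, G.loopless, Nat.cast_zero]
  ring

lemma two_mul_genus (G : Multigraph V) :
    2 * G.genus = ∑ x, ∑ y, (G.mult x y : ℤ) - 2 * Fintype.card V + 2 := by
  have heven : ∀ U : Finset V, (2 : ℤ) ∣ ∑ x ∈ U, ∑ y ∈ U, (G.mult x y : ℤ) := fun U => by
    induction U using Finset.induction_on with
    | empty => simp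
    | insert w U hw ih => exact G.sum_insert_mult hw ▸ ih.add (Dvd.intro _ rfl)
  have := Int.mul_ediv_cancel' (heven univ)
  unfold genus
  push_cast
  linarith

lemma Reduced.two_mul_sum_add_one_le (hD : G.Reduced v D) {U : Finset V} (hU : v ∉ U) :
    2 * ∑ w ∈ U, (D w + 1) ≤
      ∑ x, ∑ y, (G.mult x y : ℤ) - ∑ x ∈ Uᶜ, ∑ y ∈ Uᶜ, (G.mult x y : ℤ) := by
  induction U using Finset.strongInduction with
  | H U ih =>
    rcases U.eq_empty_or_nonempty with rfl | hne
    · simp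
    obtain ⟨w, hw, hneg⟩ := hD.2 U hne hU
    have hrec := ih (U.erase w) (erase_ssubset hw) fun h => hU (mem_of_mem_erase h)
    rw [compl_erase, G.sum_insert_mult (by simpa using hw)] at hrec
    rw [← add_sum_erase U _ hw]
    linarith

lemma Reduced.degree_lt_genus (hD : G.Reduced v D) (hv : D v < 0) : degree D < G.genus := by
  have h := hD.two_mul_sum_add_one_le (U := {v}ᶜ) (by simp)
  have hsum := Fintype.sum_eq_add_sum_compl v fun w => D w + 1
  have hgenus := G.two_mul_genus
  simp only [compl_compl, sum_singleton, G.loopless] at h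
  simp only [sum_add_distrib, sum_const, card_univ, nsmul_eq_mul, mul_one] at hsum h
  unfold degree
  push_cast at *
  linarith

lemma Connected.winnable_of_genus_le_degree (hG : G.Connected) (hD : G.genus ≤ degree D) :
    G.Winnable D := by
  obtain ⟨v⟩ := hG.1
  obtain ⟨f, hf⟩ := hG.exists_reduced D v
  refine G.winnable_iff.2 ⟨f, fun w => ?_⟩
  by_cases hw : w = v
  · by_contra! hneg
    have := hf.degree_lt_genus (hw ▸ hneg)
    rw [degree_sub_laplacian] at this
    linarith
  · exact hf.1 w hw

lemma Connected.rankGe_degree_sub_genus (hG : G.Connected) (D : V → ℤ) :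
    G.RankGe D (degree D - G.genus) := fun E _ hdeg =>
  hG.winnable_of_genus_le_degree (by rw [degree_sub, hdeg, sub_sub_cancel])

/-- The indegree divisor, minus one at each vertex, of the acyclic orientation by increasing `φ`. -/
def orientationDivisor (G : Multigraph V) {ι : Type*} [LinearOrder ι] (φ : V → ι) : V → ℤ :=
  fun w => ∑ u with φ u < φ w, (G.mult w u : ℤ) - 1

lemma not_winnable_orientationDivisor [Nonempty V] (G : Multigraph V) {ι : Type*} [LinearOrder ι]
    (φ : V → ι) : ¬ G.Winnable (G.orientationDivisor φ) := by
  rw [winnable_iff]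
  rintro ⟨f, hf⟩
  obtain ⟨w, hw⟩ := exists_forall_le_and_lt_of_lt f φ
  have hlap : ∑ u with φ u < φ w, (G.mult w u : ℤ) ≤ G.laplacian f w := by
    rw [sum_filter]
    refine sum_le_sum fun u _ => ?_
    have hm : (0 : ℤ) ≤ G.mult w u := Nat.cast_nonneg _
    split_ifs with hφ
    · exact le_mul_of_one_le_right hm (by linarith [(hw u).2 hφ])
    · exact mul_nonneg hm (sub_nonneg.2 (hw u).1)
  have := hf w
  rw [Pi.sub_apply, orientationDivisor] at this
  linarith

lemma degree_orientationDivisor (G : Multigraph V) {ι : Type*} [LinearOrder ι] {φ : V → ι}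
    (hφ : Function.Injective φ) : degree (G.orientationDivisor φ) = G.genus - 1 := by
  have hsplit : ∑ x, ∑ y, (G.mult x y : ℤ) = ∑ x, ∑ y with φ y < φ x, (G.mult x y : ℤ)
      + ∑ x, ∑ y with φ x < φ y, (G.mult x y : ℤ) := by
    simp only [sum_filter, ← sum_add_distrib]
    refine sum_congr rfl fun x _ => sum_congr rfl fun y _ => ?_
    rcases lt_trichotomy (φ x) (φ y) with h | h | h
    · simp [h, h.not_gt]
    · simp [hφ h, G.loopless]
    · simp [h, h.not_gt]
  have hswap : ∑ x, ∑ y with φ x < φ y, (G.mult x y : ℤ)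
      = ∑ x, ∑ y with φ y < φ x, (G.mult x y : ℤ) := by
    simp only [sum_filter]
    rw [sum_comm]
    simp only [G.symm]
  have hgenus := G.two_mul_genus
  simp only [degree, orientationDivisor, sum_sub_distrib, sum_const, card_univ, nsmul_eq_mul,
    mul_one]
  linarith

lemma Connected.two_mul_genus_le_degree (hG : G.Connected) (hD : G.RankGe D G.genus) :
    2 * G.genus ≤ degree D := by
  have : Nonempty V := hG.1
  have v := Classical.arbitrary V
  by_contra! hlt
  set φ := Fintype.equivFin V
  set D' := D + Pi.single v (2 * G.genus - 1 - degree D) with hD'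
  have hdeg : degree D' = 2 * G.genus - 1 := by rw [degree_add, degree_single]; ring
  have hdeg_sub : degree (D' - G.orientationDivisor φ) = G.genus := by
    rw [degree_sub, hdeg, G.degree_orientationDivisor φ.injective]
    ring
  obtain ⟨f, hf⟩ := G.winnable_iff.1 (hG.winnable_of_genus_le_degree hdeg_sub.ge)
  have hwin := (hD _ hf (by rw [degree_sub_laplacian, hdeg_sub])).add_effective
    (effective_single v (show 0 ≤ 2 * G.genus - 1 - degree D by linarith))
  refine G.not_winnable_orientationDivisor φ (Winnable.of_sub_laplacian (f := -f) ?_)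
  convert hwin using 1
  rw [laplacian_neg, hD']
  abel

lemma Connected.two_mul_add_mul_le_two_mul_degree (hG : G.Connected) {k : ℕ}
    (hgenus : G.genus = k.choose 2)
    (hgon : ∀ l : ℤ, 1 ≤ l → l ≤ k - 2 → l * k ≤ G.gonality (l * (l + 1) / 2)) {j s : ℤ}
    (hs : 0 ≤ s) (hjs : j * (j + 1) ≤ 2 * s) (hD : G.RankGe D s) :
    2 * s + j * (2 * k - j - 1) ≤ 2 * degree D := by
  have : Nonempty V := hG.1
  have v := Classical.arbitrary V
  have hdrop : ∀ r ≤ s, G.RankGe (D - Pi.single v (s - r)) r := fun r hr => by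
    have := hD.sub_effective (effective_single v (sub_nonneg.2 hr))
    rwa [degree_single, sub_sub_cancel] at this
  rcases le_or_gt j 0 with hj0 | hj0
  · have hneg : j * (2 * k - j - 1) ≤ 0 := by
      rcases hj0.eq_or_lt with rfl | hlt
      · simp
      · exact mul_nonpos_of_nonpos_of_nonneg hj0 (by omega)
    linarith [hD.le_degree hs]
  rcases le_or_gt j (k - 2) with hjk | hjk
  · have heven := Int.mul_ediv_cancel' (Int.even_mul_succ_self j).two_dvd
    set r := j * (j + 1) / 2
    have hr := hdrop r (by linarith)
    have hle := (hgon j hj0 hjk).trans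
      ((isLeast_gonality (by nlinarith) hr).2 ⟨_, hr, rfl⟩)
    rw [degree_sub, degree_single] at hle
    linarith
  · have hgenus2 : 2 * G.genus = k * (k - 1) := by
      have := Nat.cast_choose_two ℚ k
      rw [hgenus]
      qify
      linarith
    have hsq := Int.le_self_sq (k - j)
    have hle := hG.two_mul_genus_le_degree (hdrop G.genus (by
      nlinarith [mul_nonneg (show 0 ≤ j + 1 - k by omega) (show 0 ≤ j + k by omega)]))
    rw [degree_sub, degree_single] at hle
    nlinarith

end RiemannRoch

end Multigraph

section Enumeration

lemma sum_range_add_ediv {n : ℕ} (hn : n ≠ 0) (T : ℤ) : ∑ i ∈ range n, (T + i) / (n : ℤ) = T := by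
  have hn' : (n : ℤ) ≠ 0 := Nat.cast_ne_zero.2 hn
  have hstep : ∀ T : ℤ, ∑ i ∈ range n, (T + 1 + i) / (n : ℤ)
      = ∑ i ∈ range n, (T + i) / (n : ℤ) + 1 := fun T => by
    rw [sum_window_succ (fun m => m / (n : ℤ)), Int.add_ediv_of_dvd_right dvd_rfl,
      Int.ediv_self hn', add_sub_cancel_left]
  induction T using Int.induction_on with
  | zero =>
    exact sum_eq_zero fun i hi => by
      rw [zero_add]
      exact Int.ediv_eq_zero_of_lt (Nat.cast_nonneg i) (by exact_mod_cast mem_range.1 hi)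
  | succ T ih => rw [hstep, ih]
  | pred T ih =>
    have := hstep (-T - 1)
    rw [sub_add_cancel, ih] at this
    linarith

/-- The residue class modulo `n` of an integer, as an index. -/
def residue (n : ℕ) [NeZero n] (m : ℤ) : Fin n :=
  ⟨(m % n).toNat, by
    have := Int.emod_lt_of_pos m (by exact_mod_cast NeZero.pos n : (0 : ℤ) < n)
    have := Int.emod_nonneg m (by exact_mod_cast NeZero.ne n : (n : ℤ) ≠ 0)
    omega⟩

variable {n : ℕ} [NeZero n]

lemma coe_residue (m : ℤ) : ((residue n m : ℕ) : ℤ) = m % n :=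
  Int.toNat_of_nonneg (Int.emod_nonneg m (by exact_mod_cast NeZero.ne n))

lemma residue_add_self (m : ℤ) : residue n (m + n) = residue n m := by
  simp [residue]

lemma residue_window_bijective (T : ℤ) :
    Function.Bijective fun i : Fin n => residue n (T + (i : ℕ)) := by
  rw [← Finite.injective_iff_bijective]
  intro i j hij
  have hmod : (T + (i : ℕ) : ℤ) % n = (T + (j : ℕ)) % n := by
    rw [← coe_residue, ← coe_residue]
    exact congrArg (fun a : Fin n => ((a : ℕ) : ℤ)) hij
  have hmod' := Int.natCast_modEq_iff.1 (Int.ModEq.add_left_cancel' T hmod)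
  exact Fin.ext (Nat.ModEq.eq_of_lt_of_lt hmod' i.2 j.2)

lemma monotone_residue_add_mul_ediv {c : Fin n → ℤ} {M : ℤ} (hc : Monotone c)
    (h : ∀ i j, c j ≤ c i + M) : Monotone fun m : ℤ => c (residue n m) + M * (m / n) := by
  intro m m' hm
  have hn : (0 : ℤ) < n := by exact_mod_cast NeZero.pos n
  have hM : 0 ≤ M := by linarith [h 0 0]
  rcases (Int.ediv_le_ediv hn hm).eq_or_lt with hq | hq
  · have hres : residue n m ≤ residue n m' := by
      rw [Fin.le_def, ← Int.ofNat_le, coe_residue, coe_residue, Int.emod_def, Int.emod_def, hq]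
      linarith
    simpa only [hq] using add_le_add_left (hc hres) _
  · have := mul_le_mul_of_nonneg_left (Int.add_one_le_of_lt hq) hM
    linarith [h (residue n m') (residue n m)]

lemma isProfile_residue {c : Fin n → ℤ} {k : ℕ} (hc : Monotone c)
    (h : ∀ i j, c j ≤ c i + (n + k + 1)) (C : ℤ) :
    IsProfile n k fun m => c (residue n m) + (n + k + 1) * (m / n) + C - m where
  monotone_add_self m m' hm := by
    have := monotone_residue_add_mul_ediv hc h hm
    dsimp only at this ⊢
    linarith
  apply_add m := by
    have hn : (n : ℤ) ≠ 0 := by exact_mod_cast NeZero.ne n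
    rw [residue_add_self, Int.add_ediv_of_dvd_right dvd_rfl, Int.ediv_self hn]
    ring

-- Firing by `-x` on an attached `K_n` changes the chips at `i` by `(n + k + 1) * x i - ∑ j, x j`,
-- so the profile only depends on the residues of `a` modulo `n + k + 1` and on one common shift.
lemma exists_isProfile_enumeration (k : ℕ) (a : Fin n → ℤ) :
    ∃ B, IsProfile n k B ∧ ∀ T, ∃ (σ : Equiv.Perm (Fin n)) (x : Fin n → ℤ),
      ∀ i : Fin n, a (σ i) + (n + k + 1) * x (σ i) - ∑ j, x j = B (T + (i : ℕ)) + (i : ℕ) := by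
  set M : ℤ := n + k + 1 with hM
  have hMpos : 0 < M := by omega
  set s := Tuple.sort fun i => a i % M
  have hclose : ∀ i j, a (s j) % M ≤ a (s i) % M + M := fun i j => by
    linarith [Int.emod_lt_of_pos (a (s j)) hMpos, Int.emod_nonneg (a (s i)) hMpos.ne']
  refine ⟨_, isProfile_residue (Tuple.monotone_sort fun i => a i % M) hclose (∑ i, a i / M),
    fun T => ?_⟩
  set τ := Equiv.ofBijective _ (residue_window_bijective (n := n) T)
  set x : Fin n → ℤ := fun j => (T + ((τ.symm (s.symm j) : Fin n) : ℕ)) / n - a j / M with hx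
  have hsum : ∑ j, x j = T - ∑ i, a i / M := by
    rw [sum_sub_distrib, ← Equiv.sum_comp (τ.trans s)]
    simp only [Equiv.trans_apply, Equiv.symm_apply_apply]
    rw [← Finset.sum_range fun i : ℕ => (T + i) / (n : ℤ), sum_range_add_ediv (NeZero.ne n)]
  refine ⟨τ.trans s, x, fun i => ?_⟩
  have hdiv := Int.emod_def (a (s (τ i))) M
  rw [hsum]
  simp only [hx, Equiv.trans_apply, Equiv.symm_apply_apply]
  rw [show residue n (T + (i : ℕ)) = τ i from rfl, Function.comp_apply, ← hM]
  linarith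

end Enumeration

section AttachComplete

variable (G' : Multigraph V) (v : V) (k n : ℕ)

lemma laplacian_attachComplete_inl (f : V ⊕ Fin n → ℤ) (w : V) :
    (attachComplete G' v k n).laplacian f (.inl w) = G'.laplacian (f ∘ .inl) w
      + if w = v then (k + 1) * ∑ i, (f (.inl v) - f (.inr i)) else 0 := by
  rw [Multigraph.laplacian, Fintype.sum_sum_type, Multigraph.laplacian]
  congr 1
  split_ifs with h
  · rw [mul_sum]
    exact sum_congr rfl fun i _ => by simp [attachComplete, h]
  · simp [attachComplete, h]

lemma laplacian_attachComplete_inr (f : V ⊕ Fin n → ℤ) (i : Fin n) :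
    (attachComplete G' v k n).laplacian f (.inr i) =
      (k + 1) * (f (.inr i) - f (.inl v)) + ∑ j, (f (.inr i) - f (.inr j)) := by
  rw [Multigraph.laplacian, Fintype.sum_sum_type]
  congr 1
  · simp [attachComplete]
  · refine sum_congr rfl fun j _ => ?_
    by_cases h : i = j <;> simp [attachComplete, h]

variable {G' v k n}

lemma attachComplete_connected (hG : G'.Connected) : (attachComplete G' v k n).Connected := by
  have : Std.Symm (attachComplete G' v k n).Adj :=
    ⟨fun x y h => by rwa [Multigraph.Adj, Multigraph.symm]⟩
  have hreach : ∀ x, Relation.ReflTransGen (attachComplete G' v k n).Adj x (.inl v) := by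
    rintro (w | i)
    · exact Relation.ReflTransGen.lift Sum.inl (fun _ _ h => h) _ _ (hG.2 w v)
    · exact .single (by simp [Multigraph.Adj, attachComplete])
  exact ⟨⟨.inl v⟩, fun x y => (hreach x).trans (symm (hreach y))⟩

lemma degree_sumElim {α β : Type*} [Fintype α] [Fintype β] (D : α ⊕ β → ℤ) :
    Multigraph.degree D = Multigraph.degree (D ∘ .inl) + ∑ i, D (.inr i) :=
  Fintype.sum_sum_type D

lemma Multigraph.Winnable.of_attachComplete {D : V ⊕ Fin n → ℤ} {σ : Equiv.Perm (Fin n)}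
    (hD : ∀ i, D (.inr (σ i)) ≤ k + (i : ℕ)) (h : (attachComplete G' v k n).Winnable D) :
    G'.Winnable (D ∘ .inl) := by
  obtain ⟨f, hf⟩ := Multigraph.winnable_iff _ |>.1 h
  have hle : ∀ i, f (.inr i) ≤ f (.inl v) := by
    by_contra! ⟨i₀, hi₀⟩
    have : Nonempty (Fin n) := ⟨i₀⟩
    obtain ⟨w, hw⟩ := exists_forall_le_and_lt_of_lt (fun i => f (.inr i)) σ.symm
    have hv : f (.inl v) + 1 ≤ f (.inr w) := hi₀.trans_le (hw i₀).1
    have hsum : ((σ.symm w : ℕ) : ℤ) ≤ ∑ j, (f (.inr w) - f (.inr j)) := by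
      calc ((σ.symm w : ℕ) : ℤ) = ∑ j, if σ.symm j < σ.symm w then 1 else 0 := by
            rw [Equiv.sum_comp σ.symm fun j => if j < σ.symm w then (1 : ℤ) else 0, sum_boole,
              filter_gt_eq_Iio, Fin.card_Iio]
        _ ≤ _ := sum_le_sum fun j _ => by
            have := (hw j).1
            split_ifs with h
            · linarith [(hw j).2 h]
            · linarith
    have hchips := hD (σ.symm w)
    have hleg := hf (.inr w)
    rw [Equiv.apply_symm_apply] at hchips
    rw [Pi.sub_apply, laplacian_attachComplete_inr] at hleg
    nlinarith
  refine (Multigraph.winnable_iff _).2 ⟨f ∘ .inl, fun w => ?_⟩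
  have hleg := hf (.inl w)
  rw [Pi.sub_apply, laplacian_attachComplete_inl] at hleg
  have hnonneg : 0 ≤ (k + 1) * ∑ i, (f (.inl v) - f (.inr i)) :=
    mul_nonneg (by positivity) (sum_nonneg fun i _ => sub_nonneg.2 (hle i))
  rw [Pi.sub_apply, Function.comp_apply]
  split_ifs at hleg <;> linarith

lemma Multigraph.RankGe.of_attachComplete {D : V ⊕ Fin n → ℤ} {r : ℤ}
    (h : (attachComplete G' v k n).RankGe D r) (σ : Equiv.Perm (Fin n)) :
    G'.RankGe (D ∘ .inl) (r - ∑ i, max (D (.inr (σ i)) - (k + (i : ℕ))) 0) := fun E hE hdeg => by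
  set e : Fin n → ℤ := fun j => max (D (.inr j) - (k + (σ.symm j : ℕ))) 0
  have hsum : ∑ j, e j = ∑ i, max (D (.inr (σ i)) - (k + (i : ℕ))) 0 := by
    rw [← Equiv.sum_comp σ e]
    simp [e]
  have heff : Multigraph.Effective (Sum.elim E e) := by
    rintro (w | j)
    · exact hE w
    · exact le_max_right _ _
  have hwin := h _ heff (by
    rw [degree_sumElim, Sum.elim_comp_inl, hdeg]
    simp only [Sum.elim_inr, hsum, sub_add_cancel])
  refine Multigraph.Winnable.of_attachComplete (σ := σ) (fun i => ?_) hwin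
  have := le_max_left (D (.inr (σ i)) - (k + (i : ℕ))) 0
  simp only [Pi.sub_apply, Sum.elim_inr, e, Equiv.symm_apply_apply]
  linarith

lemma exists_isProfile_attachComplete (G' : Multigraph V) (v : V) (k : ℕ) {n : ℕ} [NeZero n]
    (D : V ⊕ Fin n → ℤ) :
    ∃ B, IsProfile n k B ∧ ∀ T, ∃ (f : V ⊕ Fin n → ℤ) (σ : Equiv.Perm (Fin n)), ∀ i : Fin n,
      (D - (attachComplete G' v k n).laplacian f) (.inr (σ i)) = B (T + (i : ℕ)) + (i : ℕ) := by
  obtain ⟨B, hB, henum⟩ := exists_isProfile_enumeration k (D ∘ .inr)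
  refine ⟨B, hB, fun T => ?_⟩
  obtain ⟨σ, x, hx⟩ := henum T
  refine ⟨Sum.elim 0 (-x), σ, fun i => ?_⟩
  rw [← hx i, Pi.sub_apply, laplacian_attachComplete_inr]
  simp only [Sum.elim_inr, Sum.elim_inl, Pi.zero_apply, Pi.neg_apply, sum_sub_distrib,
    sum_neg_distrib, sum_const, card_univ, Fintype.card_fin, nsmul_eq_mul, Function.comp_apply]
  ring

lemma mul_add_le_degree_of_rankGe_attachComplete (hG' : G'.Connected)
    (hgenus : G'.genus = k.choose 2)
    (hgon : ∀ l : ℤ, 1 ≤ l → l ≤ k - 2 → l * k ≤ G'.gonality (l * (l + 1) / 2))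
    [NeZero n] {D : V ⊕ Fin n → ℤ} {l : ℤ}
    (hD : (attachComplete G' v k n).RankGe D (l * (l + 1) / 2)) :
    l * (k + n) ≤ Multigraph.degree D := by
  obtain ⟨B, hB, hfire⟩ := exists_isProfile_attachComplete G' v k D
  obtain ⟨T, p, hover, hcap⟩ := hB.exists_window l
  obtain ⟨f, σ, hchips⟩ := hfire T
  set D' := D - (attachComplete G' v k n).laplacian f with hD'
  have hdegree : Multigraph.degree (D' ∘ .inl)
      = Multigraph.degree D - (overflow n k B T + capped n k B T + ∑ i ∈ range n, (i : ℤ)) := by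
    have hsplit : ∀ i ∈ range n, max (B (T + i) - k) 0 + min (B (T + i)) k + i = B (T + i) + i :=
      fun i _ => by omega
    rw [overflow, capped, ← sum_add_distrib, ← sum_add_distrib, sum_congr rfl hsplit,
      Finset.sum_range, ← sum_congr rfl fun i _ => hchips i,
      Equiv.sum_comp σ fun i => D' (.inr i),
      ← (attachComplete G' v k n).degree_sub_laplacian (D := D) f,
      degree_sumElim D', add_sub_cancel_right]
  have hrank : G'.RankGe (D' ∘ .inl) (l * (l + 1) / 2 - overflow n k B T) := by
    convert (hD.sub_laplacian f).of_attachComplete σ using 2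
    rw [overflow, Finset.sum_range]
    refine sum_congr rfl fun i _ => ?_
    rw [← hD', hchips, add_sub_add_right_eq_sub]
  have heven := Int.mul_ediv_cancel' (Int.even_mul_succ_self l).two_dvd
  have hstair := two_mul_sum_range_sub l p
  have hsq := mul_add_one_self_nonneg (l - p)
  have := hG'.two_mul_add_mul_le_two_mul_degree hgenus hgon (j := l - p) (by linarith)
    (by linarith) hrank
  linarith

end AttachComplete

theorem stmt14_general (G' : Multigraph V) (hG' : G'.Connected)
    (k : ℕ) (hgenus : G'.genus = (Nat.choose k 2 : ℤ)) (v : V)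
    (hgon : ∀ l : ℤ, 1 ≤ l → l ≤ (k : ℤ) - 2 →
      l * (k : ℤ) ≤ G'.gonality (l * (l + 1) / 2))
    (n : ℕ) (hn : 1 ≤ n) (l : ℤ) :
    l * ((k : ℤ) + n) ≤ (attachComplete G' v k n).gonality (l * (l + 1) / 2) := by
  have : NeZero n := ⟨by omega⟩
  have hG := attachComplete_connected (v := v) (k := k) (n := n) hG'
  have : Nonempty (V ⊕ Fin n) := hG.1
  set r := l * (l + 1) / 2
  have hr : 0 ≤ r := Int.ediv_nonneg (mul_add_one_self_nonneg l) zero_le_two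
  have hD := hG.rankGe_degree_sub_genus
    (Pi.single (.inl v) (r + (attachComplete G' v k n).genus))
  rw [Multigraph.degree_single, add_sub_cancel_right] at hD
  obtain ⟨D, hD, hdeg⟩ := (Multigraph.isLeast_gonality hr hD).1
  exact hdeg ▸ mul_add_le_degree_of_rankGe_attachComplete hG' hgenus hgon hD

/-- Lower bound main lemma: with `G'` of genus `C(k,2)` satisfying the
gonality hypotheses at `v`, and `G` obtained by attaching `K_n` to `v` along `k+1` edges,
`gon_{l(l+1)/2}(G) ≥ l(k+n)` for every `1 ≤ l ≤ k+n-2`. -/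
theorem stmt14 (G' : Multigraph V) (hG' : G'.Connected)
    (k : ℕ) (hk : 1 ≤ k) (hgenus : G'.genus = (Nat.choose k 2 : ℤ)) (v : V)
    (hgon : ∀ l : ℤ, 1 ≤ l → l ≤ (k : ℤ) - 2 →
      l * (k : ℤ) ≤ G'.gonality (l * (l + 1) / 2))
    (hreal : ∀ r : ℤ, 1 ≤ r →
      G'.Realises r (fun w => if w = v then G'.gonality r else 0))
    (n : ℕ) (hn : 1 ≤ n) :
    ∀ l : ℤ, 1 ≤ l → l ≤ (k : ℤ) + n - 2 →
      l * ((k : ℤ) + n) ≤ (attachComplete G' v k n).gonality (l * (l + 1) / 2) :=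
  fun l _ _ => stmt14_general G' hG' k hgenus v hgon n hn l
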